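/- Let H be a real inner product space, let f, g ∈ H, let (φ_i)_{i∈ℕ} be a sequence in H, and let (α_i)_{i∈ℕ} be nonnegative reals with Σ_{i=1}^∞ α_i = 1 such that the series Σ_{i=1}^∞ α_i φ_i converges in H and ‖Σ_{i=1}^∞ α_i φ_i − f‖ ≤ ε. Then there exists an index i such that ⟨g − f, φ_i − f⟩ ≤ ‖g − f‖ · ε. -/

import Mathlib

/-!
The inner products `⟪g - f, φ i - f⟫`, averaged with the weights `α i`, give `⟪g - f, s - f⟫`
by linearity and continuity of the inner product, and Cauchy–Schwarz bounds this average by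
`‖g - f‖ * ε`. If every inner product exceeded `‖g - f‖ * ε`, so would their average.
-/

open scoped RealInnerProductSpace

/-- **Selection step of the greedy approximation theorem.**
If `f` is within `ε` of a convex combination `Σ αᵢ φᵢ` (with `αᵢ ≥ 0`, `Σ αᵢ = 1`,
the series converging in `H`), then for any `g ∈ H` there is an index `i` with
`⟨g − f, φᵢ − f⟩ ≤ ‖g − f‖ · ε`. -/
theorem exists_index_inner_le_of_convex_combination
    {H : Type*} [NormedAddCommGroup H] [InnerProductSpace ℝ H]
    (f g : H) (φ : ℕ → H) (α : ℕ → ℝ) (ε : ℝ) (s : H)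
    (hα : ∀ i, 0 ≤ α i) (hαsum : HasSum α 1)
    (hs : HasSum (fun i => α i • φ i) s)
    (hsf : ‖s - f‖ ≤ ε) :
    ∃ i, ⟪g - f, φ i - f⟫ ≤ ‖g - f‖ * ε := by
  by_contra! h
  -- The weights sum to `1`, so one of them is positive; this makes the comparison below strict.
  obtain ⟨j, hj⟩ : ∃ j, 0 < α j := by
    by_contra! h0
    have hz : α = fun _ => 0 := funext fun i => le_antisymm (h0 i) (hα i)
    rw [hz] at hαsum
    exact zero_ne_one (hasSum_zero.unique hαsum)
  have hinner : HasSum (fun i => α i * ⟪g - f, φ i - f⟫) ⟪g - f, s - f⟫ := by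
    have h1 := (hs.sub (hαsum.smul_const f)).mapL (innerSL ℝ (g - f))
    simpa only [← smul_sub, one_smul, innerSL_apply_apply, inner_smul_right] using h1
  have hconst : HasSum (fun i => α i * (‖g - f‖ * ε)) (‖g - f‖ * ε) := by
    simpa only [one_mul] using hαsum.mul_right (‖g - f‖ * ε)
  have hlt : ‖g - f‖ * ε < ⟪g - f, s - f⟫ :=
    hasSum_lt (fun i => mul_le_mul_of_nonneg_left (h i).le (hα i))
      (mul_lt_mul_of_pos_left (h j) hj) hconst hinner
  have hle : ⟪g - f, s - f⟫ ≤ ‖g - f‖ * ε :=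
    (real_inner_le_norm _ _).trans (mul_le_mul_of_nonneg_left hsf (norm_nonneg _))
  exact hlt.not_ge hle
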